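/- Let Q be a finite quiver without loops and multiedges and let R be a lluf subquiver of Q. If DE(R) is a facet of DE(Q), then |π_0(R)| = |π_0(Q)| or |π_0(R)| = |π_0(Q)| + 1. -/

import Mathlib

open scoped BigOperators

/-- The vector `ε_(v,w) = e_v - e_w` in `ℝ^V`. -/
def epsVec {V : Type*} [DecidableEq V] (e : V × V) : V → ℝ :=
  fun u => (if u = e.1 then (1 : ℝ) else 0) - (if u = e.2 then (1 : ℝ) else 0)

/-- The directed edge polytope of the quiver with edge set `E`. -/
def DE {V : Type*} [DecidableEq V] (E : Set (V × V)) : Set (V → ℝ) :=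
  convexHull ℝ (epsVec '' E)

/-- The edge relation of a quiver. -/
def edgeRel {V : Type*} (E : Set (V × V)) : V → V → Prop := fun a b => (a, b) ∈ E

/-- Number of connected components (with respect to undirected walks). -/
noncomputable def numComponents {V : Type*} (E : Set (V × V)) : ℕ :=
  Nat.card (Quot (Relation.EqvGen (edgeRel E)))

/-- `E` admits a rank function. -/
def HasRankFn {V : Type*} (E : Set (V × V)) : Prop :=
  ∃ ρ : V → ℝ, ∀ e ∈ E, ρ e.1 + 1 = ρ e.2

open Classical in
/-- Dimension of a polytope: dimension of its affine hull, `-1` for the empty set. -/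
noncomputable def polyDim {V : Type*} (s : Set (V → ℝ)) : ℤ :=
  if s = ∅ then -1 else (Module.finrank ℝ (affineSpan ℝ s).direction : ℤ)

/-- `F` is a face of `P`: `F = P` or `F` is the intersection of `P`
with a supporting hyperplane. -/
def IsFaceOf {V : Type*} (F P : Set (V → ℝ)) : Prop :=
  F = P ∨ ∃ (l : (V → ℝ) →ₗ[ℝ] ℝ) (c : ℝ), (∀ x ∈ P, l x ≤ c) ∧ F = {x ∈ P | l x = c}

/-- `F` is a facet of `P`: a face of dimension `dim P - 1`. -/
def IsFacetOf {V : Type*} (F P : Set (V → ℝ)) : Prop :=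
  IsFaceOf F P ∧ polyDim F = polyDim P - 1

/-- Each connected component of the subquiver `R1` is a full subquiver of `Q1`. -/
def ComponentsFull {V : Type*} (Q1 R1 : Set (V × V)) : Prop :=
  ∀ v w : V, Relation.EqvGen (edgeRel R1) v w → (v, w) ∈ Q1 → (v, w) ∈ R1

/-- Edge set of the contraction `Q/R`. -/
def contraction {V : Type*} (Q1 R1 : Set (V × V)) :
    Set (Quot (Relation.EqvGen (edgeRel R1)) × Quot (Relation.EqvGen (edgeRel R1))) :=
  {p | ∃ e ∈ Q1 \ R1, p = (Quot.mk _ e.1, Quot.mk _ e.2)}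

/-- A quiver is acyclic if it has no closed directed walk of length `> 1`. -/
def IsAcyclicQ {α : Type*} (E : Set (α × α)) : Prop :=
  ¬ ∃ (n : ℕ) (v : Fin (n + 1) → α), 1 < n ∧ v 0 = v (Fin.last n) ∧
      ∀ i : Fin n, (v i.castSucc, v i.succ) ∈ E

open Classical in
lemma finrank_span_eq_polyDim {V : Type*} [Fintype V] (S : Set (V → ℝ)) :
    (Module.finrank ℝ (Submodule.span ℝ S) : ℤ) =
      polyDim (convexHull ℝ S) + (if (0 : V → ℝ) ∈ affineSpan ℝ S then 0 else 1) := by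
  unfold polyDim
  rcases S.eq_empty_or_nonempty with rfl | ⟨p, hp⟩
  · have h0 : (0 : V → ℝ) ∉ affineSpan ℝ (∅ : Set (V → ℝ)) := by
      rw [AffineSubspace.span_empty]; exact AffineSubspace.notMem_bot ℝ _ _
    rw [if_neg h0]
    simp
  · have hne : convexHull ℝ S ≠ ∅ := by
      rw [Ne, convexHull_eq_empty]; rintro rfl; exact hp
    rw [if_neg hne, affineSpan_convexHull]
    have hpA : p ∈ affineSpan ℝ S := subset_affineSpan ℝ S hp
    have hle : (affineSpan ℝ S).direction ≤ Submodule.span ℝ S := by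
      rw [direction_affineSpan, vectorSpan_def, Submodule.span_le]
      rintro _ ⟨a, ha, b, hb, rfl⟩
      exact Submodule.sub_mem _ (Submodule.subset_span ha) (Submodule.subset_span hb)
    have hsp : Submodule.span ℝ S = (affineSpan ℝ S).direction ⊔ Submodule.span ℝ {p} := by
      apply le_antisymm
      · rw [Submodule.span_le]
        intro a ha
        have h1 : a - p ∈ (affineSpan ℝ S).direction :=
          AffineSubspace.vsub_mem_direction (subset_affineSpan ℝ S ha) hpA
        have : a = (a - p) + p := by simp
        rw [this]
        exact Submodule.add_mem_sup h1 (Submodule.mem_span_singleton_self p)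
      · refine sup_le hle ?_
        rw [Submodule.span_singleton_le_iff_mem]
        exact Submodule.subset_span hp
    have key : (0 : V → ℝ) ∈ affineSpan ℝ S ↔ p ∈ (affineSpan ℝ S).direction := by
      constructor
      · intro h
        simpa using AffineSubspace.vsub_mem_direction hpA h
      · intro h
        simpa using AffineSubspace.vadd_mem_of_mem_direction (neg_mem h) hpA
    split_ifs with h0
    · have : Submodule.span ℝ S = (affineSpan ℝ S).direction := by
        rw [hsp, sup_eq_left, Submodule.span_singleton_le_iff_mem]
        exact key.1 h0
      rw [this]; simp
    · have hlt : (affineSpan ℝ S).direction < Submodule.span ℝ S := by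
        refine lt_of_le_of_ne hle fun h => h0 (key.2 ?_)
        rw [h]; exact Submodule.subset_span hp
      have h1 := Submodule.finrank_lt_finrank_of_lt hlt
      have h2 := Submodule.finrank_add_le_finrank_add_finrank
        (affineSpan ℝ S).direction (Submodule.span ℝ {p})
      have h3 : Module.finrank ℝ (Submodule.span ℝ {p}) ≤ 1 := by
        simpa using finrank_span_le_card (R := ℝ) ({p} : Set (V → ℝ))
      rw [← hsp] at h2
      omega

lemma epsVec_eq {V : Type*} [DecidableEq V] (e : V × V) :
    epsVec e = Pi.single e.1 (1 : ℝ) - Pi.single e.2 (1 : ℝ) := by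
  funext u
  simp [epsVec, Pi.single_apply]

lemma finrank_span_add_numComponents {V : Type*} [Fintype V] [DecidableEq V]
    (E : Set (V × V)) :
    Module.finrank ℝ (Submodule.span ℝ (epsVec '' E)) + numComponents E = Fintype.card V := by
  classical
  set W := Submodule.span ℝ (epsVec '' E) with hW
  have : Fintype (Quot (Relation.EqvGen (edgeRel E))) := Fintype.ofFinite _
  let Ψ : (Quot (Relation.EqvGen (edgeRel E)) → ℝ) →ₗ[ℝ] Module.Dual ℝ (V → ℝ) :=
    { toFun := fun g => ∑ v, g (Quot.mk _ v) • LinearMap.proj v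
      map_add' := by intro a b; simp [add_smul, Finset.sum_add_distrib]
      map_smul' := by intro a b; simp [mul_smul, Finset.smul_sum] }
  have hΨ : ∀ g v, Ψ g (Pi.single v 1) = g (Quot.mk _ v) := by
    intro g v
    simp [Ψ, LinearMap.sum_apply, Pi.single_apply]
  have hinj : Function.Injective Ψ := by
    intro a b h
    funext q
    induction q using Quot.ind with
    | mk v => rw [← hΨ a v, ← hΨ b v, h]
  have hrange : LinearMap.range Ψ = W.dualAnnihilator := by
    apply le_antisymm
    · rintro _ ⟨g, rfl⟩
      rw [Submodule.mem_dualAnnihilator]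
      have : W ≤ LinearMap.ker (Ψ g) := by
        rw [hW, Submodule.span_le]
        rintro _ ⟨e, he, rfl⟩
        have h1 : (Quot.mk (Relation.EqvGen (edgeRel E)) e.1) = Quot.mk _ e.2 :=
          Quot.sound (Relation.EqvGen.rel _ _ he)
        simp [epsVec_eq, hΨ, h1]
      exact fun w hw => this hw
    · intro φ hφ
      rw [Submodule.mem_dualAnnihilator] at hφ
      have hrel : ∀ a b, Relation.EqvGen (edgeRel E) a b →
          φ (Pi.single a 1) = φ (Pi.single b 1) := by
        intro a b h
        induction h with
        | rel a b h =>
          have := hφ _ (Submodule.subset_span ⟨(a, b), h, rfl⟩)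
          rw [epsVec_eq, map_sub] at this
          exact sub_eq_zero.1 this
        | refl => rfl
        | symm _ _ _ ih => exact ih.symm
        | trans _ _ _ _ _ ih1 ih2 => exact ih1.trans ih2
      refine ⟨Quot.lift (fun v => φ (Pi.single v 1)) hrel, ?_⟩
      apply LinearMap.pi_ext'
      intro v
      apply LinearMap.ext_ring
      simp only [LinearMap.comp_apply, LinearMap.single_apply]
      rw [hΨ]
  have h1 := Subspace.finrank_add_finrank_dualAnnihilator_eq W
  have h2 := LinearMap.finrank_range_of_inj hinj
  rw [hrange] at h2
  rw [h2] at h1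
  simpa [numComponents, Nat.card_eq_fintype_card] using h1

/-- If `DE(R)` is a facet of `DE(Q)` for a lluf subquiver `R`, then the number of
connected components of `R` is that of `Q` or exceeds it by one. -/
theorem facet_components {V : Type*} [Fintype V] [DecidableEq V]
    (Q1 R1 : Set (V × V)) (hloop : ∀ v : V, (v, v) ∉ Q1) (hsub : R1 ⊆ Q1)
    (hfacet : IsFacetOf (DE R1) (DE Q1)) :
    numComponents R1 = numComponents Q1 ∨ numComponents R1 = numComponents Q1 + 1 := by
  have hR := finrank_span_eq_polyDim (epsVec '' R1)
  have hQ := finrank_span_eq_polyDim (epsVec '' Q1)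
  have cR := finrank_span_add_numComponents R1
  have cQ := finrank_span_add_numComponents Q1
  have hd := hfacet.2
  unfold DE at hd
  have hmono : (0 : V → ℝ) ∈ affineSpan ℝ (epsVec '' R1) →
      (0 : V → ℝ) ∈ affineSpan ℝ (epsVec '' Q1) :=
    fun h => affineSpan_mono ℝ (Set.image_mono hsub) h
  split_ifs at hR hQ with a b
  · omega
  · exact absurd (hmono a) b
  · omega
  · omega
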